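/- Let μ be the evolution algebra structure on ℂ² relative to the basis e₁, e₂ given by μ(e₁,e₁) = e₂ and μ(e₂,e₂) = 0 (the algebra 𝓔₄). Then a 2-cocycle θ ∈ Z²(ℂ²) is a 2-coboundary for μ if and only if θ(e₂,e₂) = 0 and θ(e₁,e₁) ∈ ℂ·e₂; that is, B²(μ) is the 1-dimensional subspace of Z²(ℂ²) spanned by the cocycle with structure matrix (0 1; 0 0). -/

import Mathlib

/-!
Since `φ (μ eᵢ eⱼ) = 0` for `i ≠ j`, the value of `δ_μ φ` at `(eᵢ, eⱼ)` only involves the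
`i`-th coordinate of `φ eⱼ` times `eᵢ²` and the `j`-th coordinate of `φ eᵢ` times `eⱼ²`. For
`e₁² = e₂`, `e₂² = 0`, the requirement that `δ_μ φ` be a cocycle therefore reads `φ e₂ ∈ ⟨e₂⟩`, and
then `(δ_μ φ)(e₁, e₁) = φ e₂ - 2 (φ e₁)₁ e₂` lies in `⟨e₂⟩`. Conversely
`φ u = c u₂ e₂` realises the value `c e₂`.
-/

open Module (Basis)

section Evolution

variable {R M ι : Type*} [CommRing R] [AddCommGroup M] [Module R M]

/-- The coboundary `δ_μ φ` of an endomorphism `φ` with respect to the multiplication `μ`; it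
measures the failure of `φ` to be a derivation of `μ`. -/
def coboundary (μ : M →ₗ[R] M →ₗ[R] M) (φ : M →ₗ[R] M) : M →ₗ[R] M →ₗ[R] M :=
  μ.compr₂ φ - μ.compl₂ φ - μ.comp φ

@[simp]
theorem coboundary_apply (μ : M →ₗ[R] M →ₗ[R] M) (φ : M →ₗ[R] M) (u v : M) :
    coboundary μ φ u v = φ (μ u v) - μ u (φ v) - μ (φ u) v :=
  rfl

/-- Distinct vectors of the basis `b` multiply to zero under `μ`. This is the notion of an
evolution algebra structure relative to `b`, and equally that of a 2-cocycle. -/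
def IsEvolution (b : Basis ι R M) (μ : M →ₗ[R] M →ₗ[R] M) : Prop :=
  ∀ i j, i ≠ j → μ (b i) (b j) = 0

namespace IsEvolution

variable {b : Basis ι R M} {μ θ : M →ₗ[R] M →ₗ[R] M}

theorem ext (hμ : IsEvolution b μ) (hθ : IsEvolution b θ)
    (h : ∀ i, μ (b i) (b i) = θ (b i) (b i)) : μ = θ := by
  refine LinearMap.ext_basis b b fun i j ↦ ?_
  obtain rfl | hij := eq_or_ne i j
  · exact h i
  · rw [hμ i j hij, hθ i j hij]

theorem apply_basis_right (hμ : IsEvolution b μ) (u : M) (j : ι) :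
    μ u (b j) = b.coord j u • μ (b j) (b j) := by
  suffices h : μ.flip (b j) = (b.coord j).smulRight (μ (b j) (b j)) from DFunLike.congr_fun h u
  refine b.ext fun i ↦ ?_
  obtain rfl | hij := eq_or_ne i j
  · simp
  · simp [hμ i j hij, hij]

theorem flip (hμ : IsEvolution b μ) : IsEvolution b μ.flip :=
  fun i j hij ↦ hμ j i hij.symm

theorem apply_basis_left (hμ : IsEvolution b μ) (i : ι) (v : M) :
    μ (b i) v = b.coord i v • μ (b i) (b i) :=
  hμ.flip.apply_basis_right v i

theorem coboundary_apply_basis_self (hμ : IsEvolution b μ) (φ : M →ₗ[R] M) (i : ι) :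
    coboundary μ φ (b i) (b i) =
      φ (μ (b i) (b i)) - (2 * b.coord i (φ (b i))) • μ (b i) (b i) := by
  rw [coboundary_apply, hμ.apply_basis_left i (φ (b i)), hμ.apply_basis_right (φ (b i)) i]
  module

theorem coboundary_apply_basis_of_ne (hμ : IsEvolution b μ) (φ : M →ₗ[R] M) {i j : ι}
    (hij : i ≠ j) :
    coboundary μ φ (b i) (b j) =
      -(b.coord i (φ (b j)) • μ (b i) (b i) + b.coord j (φ (b i)) • μ (b j) (b j)) := by
  rw [coboundary_apply, hμ i j hij, hμ.apply_basis_left i (φ (b j)),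
    hμ.apply_basis_right (φ (b i)) j, map_zero]
  abel

theorem isEvolution_coboundary_iff (hμ : IsEvolution b μ) {φ : M →ₗ[R] M} :
    IsEvolution b (coboundary μ φ) ↔ ∀ i j, i ≠ j →
      b.coord i (φ (b j)) • μ (b i) (b i) + b.coord j (φ (b i)) • μ (b j) (b j) = 0 := by
  refine forall₃_congr fun i j hij ↦ ?_
  rw [hμ.coboundary_apply_basis_of_ne φ hij, neg_eq_zero]

end IsEvolution

variable {b : Basis (Fin 2) R M} {μ : M →ₗ[R] M →ₗ[R] M}

theorem isEvolution_coboundary_iff_coord_eq_zero (hμ : IsEvolution b μ)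
    (hμ0 : μ (b 0) (b 0) = b 1) (hμ1 : μ (b 1) (b 1) = 0) {φ : M →ₗ[R] M} :
    IsEvolution b (coboundary μ φ) ↔ b.coord 0 (φ (b 1)) = 0 := by
  rw [hμ.isEvolution_coboundary_iff]
  constructor
  · intro h
    have h01 : b.coord 0 (φ (b 1)) • b 1 = 0 := by simpa [hμ0, hμ1] using h 0 1 zero_ne_one
    simpa using congrArg (b.coord 1) h01
  · intro h
    simp_all [Fin.forall_fin_two]

theorem stmt9_general {θ : M →ₗ[R] M →ₗ[R] M} (hμ : IsEvolution b μ)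
    (hμ0 : μ (b 0) (b 0) = b 1) (hμ1 : μ (b 1) (b 1) = 0) (hθ : IsEvolution b θ) :
    (∃ φ : M →ₗ[R] M, θ = coboundary μ φ) ↔
      θ (b 1) (b 1) = 0 ∧ ∃ c : R, θ (b 0) (b 0) = c • b 1 := by
  have cocycle_iff {φ : M →ₗ[R] M} :=
    isEvolution_coboundary_iff_coord_eq_zero hμ hμ0 hμ1 (φ := φ)
  constructor
  · rintro ⟨φ, rfl⟩
    have hφ : φ (b 1) = b.coord 1 (φ (b 1)) • b 1 := by
      have hsum := b.sum_repr (φ (b 1))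
      rw [Fin.sum_univ_two, ← b.coord_apply, cocycle_iff.mp hθ, zero_smul, zero_add] at hsum
      exact hsum.symm
    refine ⟨?_, b.coord 1 (φ (b 1)) - 2 * b.coord 0 (φ (b 0)), ?_⟩
    · rw [hμ.coboundary_apply_basis_self, hμ1, map_zero, smul_zero, sub_zero]
    · rw [hμ.coboundary_apply_basis_self, hμ0, sub_smul, ← hφ]
  · rintro ⟨hθ1, c, hθ0⟩
    let φ : M →ₗ[R] M := (b.coord 1).smulRight (c • b 1)
    have hφ : IsEvolution b (coboundary μ φ) := cocycle_iff.mpr (by simp [φ])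
    refine ⟨φ, hθ.ext hφ (Fin.forall_fin_two.mpr ⟨?_, ?_⟩)⟩
    · simp [hμ.coboundary_apply_basis_self, hμ0, hθ0, φ]
    · simp [hμ.coboundary_apply_basis_self, hμ1, hθ1]

end Evolution

/-- For the evolution algebra `𝓔₄` on `ℂ²` with `e₁² = e₂`, `e₂² = 0`,
a 2-cocycle `θ` is a 2-coboundary if and only if `θ(e₂,e₂) = 0` and
`θ(e₁,e₁) ∈ ℂ·e₂`. -/
theorem stmt9 (e : Fin 2 → (Fin 2 → ℂ)) (he : ∀ i, e i = Pi.single i 1)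
    (μ θ : (Fin 2 → ℂ) →ₗ[ℂ] (Fin 2 → ℂ) →ₗ[ℂ] (Fin 2 → ℂ))
    (hμz : ∀ i j : Fin 2, i ≠ j → μ (e i) (e j) = 0)
    (hμ0 : μ (e 0) (e 0) = e 1) (hμ1 : μ (e 1) (e 1) = 0)
    (hθz : ∀ i j : Fin 2, i ≠ j → θ (e i) (e j) = 0) :
    (∃ φ : (Fin 2 → ℂ) →ₗ[ℂ] (Fin 2 → ℂ),
        ∀ u v : Fin 2 → ℂ, θ u v = φ (μ u v) - μ u (φ v) - μ (φ u) v) ↔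
    (θ (e 1) (e 1) = 0 ∧ ∃ c : ℂ, θ (e 0) (e 0) = c • e 1) := by
  obtain rfl : e = Pi.basisFun ℂ (Fin 2) := funext fun i ↦ by rw [he, Pi.basisFun_apply]
  simpa only [LinearMap.ext_iff₂, coboundary_apply] using stmt9_general hμz hμ0 hμ1 hθz
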